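/- Let 𝒞 be a category and let C be an object equipped with a binary product cone (p₁, p₂ : C → C) exhibiting C as the product of C with C, and let α : C → C be the unique morphism satisfying p₁ ∘ α = p₁ ∘ p₁, p₁ ∘ p₂ ∘ α = p₂ ∘ p₁, and p₂ ∘ α = p₂ ∘ p₂. If α = id_C, then p₂ = id_C. -/

import Mathlib

open CategoryTheory CategoryTheory.Limits

universe u v

theorem isSplitEpi_snd_of_isLimit {𝒞 : Type u} [Category.{v} 𝒞] {X Y : 𝒞} {c : BinaryFan X Y}
    (hc : IsLimit c) (f : Y ⟶ X) : IsSplitEpi c.snd :=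
  .mk' ⟨BinaryFan.IsLimit.lift hc f (𝟙 Y), BinaryFan.IsLimit.lift_snd hc f (𝟙 Y)⟩

theorem stmt2_general {𝒞 : Type u} [Category.{v} 𝒞] {C : 𝒞} (p : C ⟶ C) [Epi p]
    (hp : p ≫ p = p) : p = 𝟙 C :=
  (cancel_epi_id p).1 hp

/-- **Statement 1.** If the associator component `α` built from the single cone
`(p₁, p₂ : C ⟶ C)` is the identity, then `p₂ = 𝟙 C`. -/
theorem stmt2 {𝒞 : Type u} [Category.{v} 𝒞] (C : 𝒞) (p₁ p₂ : C ⟶ C)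
    (hlim : IsLimit (BinaryFan.mk p₁ p₂))
    (α : C ⟶ C)
    (h₁ : α ≫ p₁ = p₁ ≫ p₁)
    (h₂ : α ≫ p₂ ≫ p₁ = p₁ ≫ p₂)
    (h₃ : α ≫ p₂ = p₂ ≫ p₂)
    (hα : α = 𝟙 C) :
    p₂ = 𝟙 C := by
  have : IsSplitEpi p₂ := isSplitEpi_snd_of_isLimit hlim (𝟙 C)
  exact stmt2_general p₂ (by rw [← h₃, hα, Category.id_comp])
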